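/- arXiv:1905.00084 — 2 statements merged into one kernel-verified Lean document; each statement's English description precedes it below -/
import Mathlib

section
/- For every natural number n ≥ 1 and every vector a = (a_1,…,a_n) with 0 ≤ a_j ≤ 1 for all j, one has 1 − ∏_{j=1}^n (1 − a_j) ≥ (1 − (1 − 1/n)^n) · min(1, ∑_{j=1}^n a_j). -/
theorem pickup_prob_lower_bound_dim (n : ℕ) (hn : 1 ≤ n) (a : Fin n → ℝ)
    (h : ∀ j, 0 ≤ a j ∧ a j ≤ 1) :
    (1 - (1 - 1 / (n : ℝ)) ^ n) * min 1 (∑ j, a j) ≤ 1 - ∏ j, (1 - a j) := by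
  have hn1 : (1 : ℝ) ≤ n := by exact_mod_cast hn
  have hn0 : (0 : ℝ) < n := by linarith
  have hS : 0 ≤ ∑ j, a j := Finset.sum_nonneg fun j _ => (h j).1
  have hP : 0 ≤ ∏ j, (1 - a j) := Finset.prod_nonneg fun j _ => by linarith [(h j).2]
  have amgm := Real.geom_mean_le_arith_mean Finset.univ (fun _ : Fin n => (1 : ℝ))
    (fun j => 1 - a j) (fun _ _ => zero_le_one) (by simp; omega)
    (fun j _ => by linarith [(h j).2])
  simp only [Real.rpow_one, one_mul, Finset.sum_sub_distrib, Finset.sum_const, Finset.card_univ,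
    Fintype.card_fin, nsmul_eq_mul, mul_one] at amgm
  have h1 : ∏ j, (1 - a j) ≤ (((n : ℝ) - ∑ j, a j) / n) ^ n := by
    have := pow_le_pow_left₀ (Real.rpow_nonneg hP _) amgm n
    rwa [Real.rpow_inv_natCast_pow hP (by omega)] at this
  have hSn : ∑ j, a j ≤ n := by
    have := Finset.sum_le_sum (s := Finset.univ) fun j _ => (h j).2
    simpa using this
  have hm1 : min 1 (∑ j, a j) ≤ 1 := min_le_left _ _
  have hmS : min 1 (∑ j, a j) ≤ ∑ j, a j := min_le_right _ _
  have hm0 : 0 ≤ min 1 (∑ j, a j) := le_min zero_le_one hS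
  generalize min 1 (∑ j, a j) = m at *
  have h2 : (((n : ℝ) - ∑ j, a j) / n) ^ n ≤ ((1 - m) * 1 + m * (1 - 1 / (n : ℝ))) ^ n := by
    apply pow_le_pow_left₀ (div_nonneg (by linarith) hn0.le)
    have : (1 - m) * 1 + m * (1 - 1 / (n : ℝ)) = (n - m) / n := by field_simp; ring
    rw [this]
    gcongr
  have hq : (1 - 1 / (n : ℝ)) ∈ Set.Ici (0 : ℝ) := by
    have : 1 / (n : ℝ) ≤ 1 := by rw [div_le_one hn0]; exact hn1
    simp only [Set.mem_Ici]; linarith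
  have hone : (1 : ℝ) ∈ Set.Ici (0 : ℝ) := by simp
  have hm' : 0 ≤ 1 - m := by linarith
  have h3 := (convexOn_pow (𝕜 := ℝ) n).2 hone hq hm' hm0 (by ring)
  simp only [smul_eq_mul, one_pow] at h3
  nlinarith [h1.trans (h2.trans h3)]
end

section
/- For every natural number n and every vector a = (a_1,…,a_n) with 0 ≤ a_j ≤ 1 for all j, one has (1 − 1/e) · min(1, ∑_{j=1}^n a_j) ≤ 1 − ∏_{j=1}^n (1 − a_j) ≤ min(1, ∑_{j=1}^n a_j), where e is Euler's number. -/
theorem union_bound_aux {ι : Type*} (s : Finset ι) (a : ι → ℝ)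
    (h : ∀ j, 0 ≤ a j ∧ a j ≤ 1) : 1 - ∏ j ∈ s, (1 - a j) ≤ ∑ j ∈ s, a j := by
  classical
  induction s using Finset.induction_on with
  | empty => simp
  | insert i s hi ih =>
    rw [Finset.prod_insert hi, Finset.sum_insert hi]
    have h1 : ∏ j ∈ s, (1 - a j) ≤ 1 :=
      Finset.prod_le_one (fun j _ => by linarith [(h j).2]) (fun j _ => by linarith [(h j).1])
    nlinarith [mul_nonneg (h i).1 (sub_nonneg.2 h1)]

theorem pickup_prob_sandwich (n : ℕ) (a : Fin n → ℝ)
    (h : ∀ j, 0 ≤ a j ∧ a j ≤ 1) :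
    (1 - 1 / Real.exp 1) * min 1 (∑ j, a j) ≤ 1 - ∏ j, (1 - a j) ∧
      1 - ∏ j, (1 - a j) ≤ min 1 (∑ j, a j) := by
  constructor
  · have hS : 0 ≤ ∑ j, a j := Finset.sum_nonneg (fun j _ => (h j).1)
    have h1 : ∏ j, (1 - a j) ≤ Real.exp (-∑ j, a j) := by
      rw [← Finset.sum_neg_distrib, Real.exp_sum]
      exact Finset.prod_le_prod (fun j _ => by linarith [(h j).2])
        (fun j _ => Real.one_sub_le_exp_neg _)
    have hm0 : 0 ≤ min 1 (∑ j, a j) := le_min zero_le_one hS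
    have hm1 : min 1 (∑ j, a j) ≤ 1 := min_le_left _ _
    have hmS : min 1 (∑ j, a j) ≤ ∑ j, a j := min_le_right _ _
    generalize min 1 (∑ j, a j) = m at *
    have h2 : Real.exp (-∑ j, a j) ≤ Real.exp (-m) := Real.exp_le_exp.2 (by linarith)
    have h3 := convexOn_exp.2 (Set.mem_univ (0 : ℝ)) (Set.mem_univ (-1 : ℝ))
      (sub_nonneg.2 hm1) hm0 (by ring)
    simp only [smul_eq_mul, mul_zero, zero_add, mul_neg, mul_one, Real.exp_zero,
      Real.exp_neg 1] at h3
    rw [one_div]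
    linarith
  · refine le_min ?_ (union_bound_aux _ a h)
    have : 0 ≤ ∏ j, (1 - a j) := Finset.prod_nonneg (fun j _ => by linarith [(h j).2])
    linarith
end
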